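/- Let P be a Gorenstein polytope that is a Cayley join of lattice polytopes F and G with codeg(F) + codeg(G) = codeg(P). Then F and G are themselves Gorenstein polytopes. -/

import Mathlib

open Pointwise

/-- A point of `ℝ^d` is a lattice point if all its coordinates are integers. -/
def IsLatticePt {d : ℕ} (x : Fin d → ℝ) : Prop := ∀ i, ∃ z : ℤ, x i = (z : ℝ)

/-- A lattice polytope is the (non-empty) convex hull of finitely many lattice points. -/
def IsLatticePolytope {d : ℕ} (P : Set (Fin d → ℝ)) : Prop :=
  ∃ V : Finset (Fin d → ℝ), V.Nonempty ∧ (∀ v ∈ V, IsLatticePt v) ∧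
    P = convexHull ℝ (V : Set (Fin d → ℝ))

/-- The dimension of a polytope: the dimension of the direction of its affine hull. -/
noncomputable def polyDim {d : ℕ} (P : Set (Fin d → ℝ)) : ℕ :=
  Module.finrank ℝ (affineSpan ℝ P).direction

/-- A polytope is hollow if its relative interior contains no lattice point. -/
def IsHollow {d : ℕ} (P : Set (Fin d → ℝ)) : Prop :=
  ∀ x ∈ intrinsicInterior ℝ P, ¬ IsLatticePt x

/-- A facet of `P`: a non-empty exposed face of dimension `dim P - 1`. -/
def IsFacet {d : ℕ} (P F : Set (Fin d → ℝ)) : Prop :=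
  IsExposed ℝ P F ∧ F.Nonempty ∧ polyDim F + 1 = polyDim P

/-- An affine functional is integral on `P` if it takes integer values on all
lattice points of the affine hull of `P`. -/
def IsIntegralOn {d : ℕ} (P : Set (Fin d → ℝ)) (u : (Fin d → ℝ) →ᵃ[ℝ] ℝ) : Prop :=
  ∀ y ∈ affineSpan ℝ P, IsLatticePt y → ∃ z : ℤ, u y = (z : ℝ)

/-- `P` is reflexive: there is a lattice point `x` in the relative interior of `P`
such that every facet of `P` has lattice distance one from `x`, i.e. for every facet `F`
there is an integral affine functional that is constant on `F` and exceeds its value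
at `x` by exactly `1`. -/
def IsReflexivePolytope {d : ℕ} (P : Set (Fin d → ℝ)) : Prop :=
  ∃ x ∈ intrinsicInterior ℝ P, IsLatticePt x ∧
    ∀ F : Set (Fin d → ℝ), IsFacet P F →
      ∃ u : (Fin d → ℝ) →ᵃ[ℝ] ℝ, IsIntegralOn P u ∧ ∀ f ∈ F, u f = u x + 1

/-- `P` is Gorenstein if some positive integer multiple `r • P` is reflexive. -/
def IsGorenstein {d : ℕ} (P : Set (Fin d → ℝ)) : Prop :=
  ∃ r : ℕ, 0 < r ∧ IsReflexivePolytope ((r : ℝ) • P)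

/-- `P` is Gorenstein of codegree `r` if `r • P` is reflexive (`r` positive). -/
def IsGorensteinOfCodeg {d : ℕ} (P : Set (Fin d → ℝ)) (r : ℕ) : Prop :=
  0 < r ∧ IsReflexivePolytope ((r : ℝ) • P)

/-- The codegree of `P`: the smallest positive integer `r` such that `r • P` is not hollow. -/
noncomputable def polyCodeg {d : ℕ} (P : Set (Fin d → ℝ)) : ℕ :=
  sInf {r : ℕ | 0 < r ∧ ¬ IsHollow ((r : ℝ) • P)}

/-- The degree of `P`: `dim P + 1 - codeg P`. -/
noncomputable def polyDeg {d : ℕ} (P : Set (Fin d → ℝ)) : ℕ :=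
  polyDim P + 1 - polyCodeg P

/-- Unimodular equivalence of lattice polytopes: an affine map carrying `P` onto `Q`,
with an affine inverse on affine hulls, such that both maps preserve lattice points of
the affine hulls. -/
def LatticeIso {d e : ℕ} (P : Set (Fin d → ℝ)) (Q : Set (Fin e → ℝ)) : Prop :=
  ∃ (f : (Fin d → ℝ) →ᵃ[ℝ] (Fin e → ℝ)) (g : (Fin e → ℝ) →ᵃ[ℝ] (Fin d → ℝ)),
    f '' P = Q ∧ g '' Q = P ∧
    (∀ x ∈ affineSpan ℝ P, g (f x) = x) ∧ (∀ y ∈ affineSpan ℝ Q, f (g y) = y) ∧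
    (∀ x ∈ affineSpan ℝ P, IsLatticePt x → IsLatticePt (f x)) ∧
    (∀ y ∈ affineSpan ℝ Q, IsLatticePt y → IsLatticePt (g y))

/-- The lattice pyramid `conv(P' × {0}, (0,1))` over `P' ⊆ ℝ^m`. -/
def pyramidOver {m : ℕ} (P' : Set (Fin m → ℝ)) : Set (Fin (m + 1) → ℝ) :=
  convexHull ℝ ((fun x => Fin.snoc x (0 : ℝ)) '' P' ∪ {Fin.snoc (0 : Fin m → ℝ) (1 : ℝ)})

/-- `P` is a lattice pyramid if it is a single lattice point or is isomorphic to a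
lattice pyramid over a lattice polytope. -/
def IsLatticePyramid {d : ℕ} (P : Set (Fin d → ℝ)) : Prop :=
  (∃ x : Fin d → ℝ, IsLatticePt x ∧ P = {x}) ∨
  ∃ (m : ℕ) (P' : Set (Fin m → ℝ)), IsLatticePolytope P' ∧ LatticeIso P (pyramidOver P')

/-- The Cayley polytope `P_1 * ⋯ * P_l ⊆ ℝ^{n+l}` of `P_1, …, P_l ⊆ ℝ^n`:
the convex hull of the sets `P_i × {e_i}`. -/
def cayley {n l : ℕ} (P : Fin l → Set (Fin n → ℝ)) : Set (Fin (n + l) → ℝ) :=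
  convexHull ℝ (⋃ i : Fin l, (fun x => Fin.append x (Pi.single i (1 : ℝ))) '' P i)

/-- The Cayley polytope `F * G ⊆ ℝ^{n+2}` of two polytopes `F, G ⊆ ℝ^n`. -/
def cayleyTwo {n : ℕ} (F G : Set (Fin n → ℝ)) : Set (Fin (n + 2) → ℝ) :=
  convexHull ℝ
    ((fun x => Fin.append x ![(1 : ℝ), 0]) '' F ∪ (fun x => Fin.append x ![(0 : ℝ), 1]) '' G)

/-- `P` is a Cayley join of `F` and `G` if `P ≅ F * G` and `dim F + dim G = dim P - 1`. -/
def IsCayleyJoin {d n : ℕ} (P : Set (Fin d → ℝ)) (F G : Set (Fin n → ℝ)) : Prop :=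
  LatticeIso P (cayleyTwo F G) ∧ polyDim F + polyDim G + 1 = polyDim P

/-- `P` is reducible with factors `F` and `G`: a Cayley join with
`codeg F + codeg G = codeg P`. -/
def IsReducibleWith {d n : ℕ} (P : Set (Fin d → ℝ)) (F G : Set (Fin n → ℝ)) : Prop :=
  IsCayleyJoin P F G ∧ polyCodeg F + polyCodeg G = polyCodeg P

/-- `P` is reducible: it is a single lattice point (by convention) or is reducible
with some factors `F` and `G` which are lattice polytopes. -/
def IsReducible {d : ℕ} (P : Set (Fin d → ℝ)) : Prop :=
  (∃ x : Fin d → ℝ, IsLatticePt x ∧ P = {x}) ∨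
  ∃ (n : ℕ) (F G : Set (Fin n → ℝ)), IsLatticePolytope F ∧ IsLatticePolytope G ∧
    IsReducibleWith P F G

/-- `P` is a Cayley polytope: a single lattice point, or isomorphic to a Cayley polytope
of `l > 1` lattice polytopes. -/
def IsCayleyPolytope {d : ℕ} (P : Set (Fin d → ℝ)) : Prop :=
  (∃ x : Fin d → ℝ, IsLatticePt x ∧ P = {x}) ∨
  ∃ (n l : ℕ) (Q : Fin l → Set (Fin n → ℝ)), 1 < l ∧ (∀ i, IsLatticePolytope (Q i)) ∧
    LatticeIso P (cayley Q)

/-- `P` is IDP if for every `k ≥ 2` every lattice point of `k • P` is a sum of `k`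
lattice points of `P`. -/
def IsIDP {d : ℕ} (P : Set (Fin d → ℝ)) : Prop :=
  ∀ k : ℕ, 2 ≤ k → ∀ x : Fin d → ℝ, IsLatticePt x → x ∈ (k : ℝ) • P →
    ∃ p : Fin k → (Fin d → ℝ), (∀ i, p i ∈ P ∧ IsLatticePt (p i)) ∧ x = ∑ i, p i

/-- The standard simplex `Δ_s = conv(0, e_1, …, e_s) ⊆ ℝ^s`. -/
def stdSimplexLP (s : ℕ) : Set (Fin s → ℝ) :=
  convexHull ℝ (insert 0 (Set.range fun i : Fin s => Pi.single i (1 : ℝ)))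

/-- The product of `F ⊆ ℝ^m` and `G ⊆ ℝ^n` inside `ℝ^{m+n}`. -/
def prodPoly {m n : ℕ} (F : Set (Fin m → ℝ)) (G : Set (Fin n → ℝ)) : Set (Fin (m + n) → ℝ) :=
  (fun p : (Fin m → ℝ) × (Fin n → ℝ) => Fin.append p.1 p.2) '' (F ×ˢ G)

/-- The free join `conv(F × 0 × {0} ∪ 0 × G × {1}) ⊆ ℝ^m × ℝ^n × ℝ`. -/
def freeJoin {m n : ℕ} (F : Set (Fin m → ℝ)) (G : Set (Fin n → ℝ)) :
    Set (Fin (m + n + 1) → ℝ) :=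
  convexHull ℝ
    ((fun x => Fin.snoc (Fin.append x (0 : Fin n → ℝ)) (0 : ℝ)) '' F ∪
     (fun y => Fin.snoc (Fin.append (0 : Fin m → ℝ) y) (1 : ℝ)) '' G)


lemma relint_iff {d : ℕ} (S : Set (Fin d → ℝ)) (x : Fin d → ℝ) :
    x ∈ intrinsicInterior ℝ S ↔ x ∈ affineSpan ℝ S ∧
      ∃ δ > 0, ∀ y ∈ affineSpan ℝ S, dist y x < δ → y ∈ S := by
  rw [mem_intrinsicInterior]
  constructor
  · rintro ⟨y, hy, rfl⟩
    refine ⟨y.2, ?_⟩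
    rw [mem_interior_iff_mem_nhds, Metric.mem_nhds_iff] at hy
    obtain ⟨δ, hδ, h⟩ := hy
    exact ⟨δ, hδ, fun z hz hd => h (show (⟨z, hz⟩ : affineSpan ℝ S) ∈ Metric.ball y δ from hd)⟩
  · rintro ⟨hx, δ, hδ, h⟩
    refine ⟨⟨x, hx⟩, ?_, rfl⟩
    rw [mem_interior_iff_mem_nhds, Metric.mem_nhds_iff]
    exact ⟨δ, hδ, fun z hz => h z z.2 hz⟩

lemma relint_zero {d : ℕ} {S : Set (Fin d → ℝ)} {x : Fin d → ℝ}
    (hx : x ∈ intrinsicInterior ℝ S) (φ : (Fin d → ℝ) →ᵃ[ℝ] ℝ)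
    (h0 : ∀ s ∈ S, 0 ≤ φ s) (hφ : φ x = 0) : ∀ s ∈ S, φ s = 0 := by
  intro s hs
  obtain ⟨hx, δ, hδ, h⟩ := (relint_iff S x).1 hx
  set ε : ℝ := δ / (2 * (dist s x + 1)) with hε
  have hdp : 0 ≤ dist s x := dist_nonneg
  have hεp : 0 < ε := by positivity
  have hy : AffineMap.lineMap x s (-ε) ∈ affineSpan ℝ S :=
    AffineMap.lineMap_mem _ hx (subset_affineSpan ℝ S hs)
  have := h _ hy (by
    rw [dist_lineMap_left, norm_neg, Real.norm_of_nonneg hεp.le, dist_comm x s, hε,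
      div_mul_eq_mul_div, div_lt_iff₀ (by positivity)]
    nlinarith)
  have h1 := h0 _ this
  rw [AffineMap.apply_lineMap, hφ, AffineMap.lineMap_apply] at h1
  have h2 := h0 s hs
  simp at h1
  nlinarith

lemma relint_combo {d : ℕ} {S : Set (Fin d → ℝ)} {p q : Fin d → ℝ} (hS : Convex ℝ S)
    (hp : p ∈ intrinsicInterior ℝ S) (hq : q ∈ S) {ε : ℝ} (h0 : 0 < ε) (h1 : ε ≤ 1) :
    AffineMap.lineMap q p ε ∈ intrinsicInterior ℝ S := by
  obtain ⟨hx, δ, hδ, h⟩ := (relint_iff S p).1 hp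
  have hq' := subset_affineSpan ℝ S hq
  refine (relint_iff S _).2 ⟨AffineMap.lineMap_mem _ hq' hx, ε * δ, by positivity, ?_⟩
  intro y hy hd
  have hm : AffineMap.lineMap q y ε⁻¹ ∈ S := by
    refine h _ (AffineMap.lineMap_mem _ hq' hy) ?_
    have e : AffineMap.lineMap q y ε⁻¹ - p = ε⁻¹ • (y - AffineMap.lineMap q p ε) := by
      ext i
      simp [AffineMap.lineMap_apply]
      field_simp
      ring
    rw [dist_eq_norm, e, norm_smul, ← dist_eq_norm, Real.norm_of_nonneg (by positivity)]
    rw [inv_mul_lt_iff₀ h0]; exact hd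
  have : y = AffineMap.lineMap q (AffineMap.lineMap q y ε⁻¹) ε := by
    ext i
    simp [AffineMap.lineMap_apply]
    field_simp
    ring
  rw [this]
  exact hS.lineMap_mem hq hm ⟨h0.le, h1⟩

lemma codeg_spec {d : ℕ} {F : Set (Fin d → ℝ)} (hF : IsLatticePolytope F) :
    0 < polyCodeg F ∧ ∃ y ∈ intrinsicInterior ℝ ((polyCodeg F : ℝ) • F), IsLatticePt y := by
  have key : polyCodeg F ∈ {r : ℕ | 0 < r ∧ ¬ IsHollow ((r : ℝ) • F)} := by
    apply Nat.sInf_mem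
    obtain ⟨V, hV, hl, rfl⟩ := hF
    have hk : 0 < V.card := hV.card_pos
    refine ⟨V.card, hk, ?_⟩
    unfold IsHollow
    push Not
    set k : ℝ := (V.card : ℝ) with hkk
    have hk' : 0 < k := by rw [hkk]; exact_mod_cast hk
    set S := k • convexHull ℝ (V : Set (Fin d → ℝ)) with hS
    have hconv : Convex ℝ S := (convex_convexHull ℝ _).smul k
    have hne : S.Nonempty := by
      obtain ⟨v, hv⟩ := hV
      exact ⟨k • v, Set.smul_mem_smul_set (subset_convexHull ℝ _ hv)⟩
    obtain ⟨p, hp⟩ := hne.intrinsicInterior hconv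
    have hpS := intrinsicInterior_subset hp
    refine ⟨∑ v ∈ V, v, ?_, ?_⟩
    · obtain ⟨p', hp', rfl⟩ := hpS
      rw [Finset.convexHull_eq] at hp'
      obtain ⟨w, hw0, hw1, hwp⟩ := hp'
      rw [Finset.centerMass_eq_of_sum_1 _ _ hw1] at hwp
      have hwle : ∀ v ∈ V, w v ≤ 1 := fun v hv => hw1 ▸ Finset.single_le_sum hw0 hv
      have hk1 : 1 ≤ k := by rw [hkk]; exact_mod_cast hk
      have h2k : 0 < 2 * k - 1 := by linarith
      have hq : k • (∑ v ∈ V, ((2 - w v) / (2 * k - 1)) • v) ∈ S := by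
        refine Set.smul_mem_smul_set ?_
        refine (convex_convexHull ℝ _).sum_mem ?_ ?_ (fun v hv => subset_convexHull ℝ _ hv)
        · intro v hv
          have := hwle v hv
          exact div_nonneg (by linarith) h2k.le
        · rw [← Finset.sum_div, Finset.sum_sub_distrib, hw1]
          simp
          rw [← hkk]
          rw [mul_comm]
          exact div_self h2k.ne'
      have := relint_combo hconv hp hq (ε := 1 / (2 * k)) (by positivity)
        (by rw [div_le_one (by positivity)]; linarith)
      convert this using 1
      rw [← hwp]
      simp only [id]
      ext i
      simp only [AffineMap.lineMap_apply, Finset.sum_apply, vsub_eq_sub, vadd_eq_add, Pi.add_apply,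
        Pi.smul_apply, Pi.sub_apply, smul_eq_mul, Finset.mul_sum, ← Finset.sum_sub_distrib,
        ← Finset.sum_add_distrib]
      refine Finset.sum_congr rfl fun v _ => ?_
      field_simp
      ring
    · intro i
      have hl' : ∀ v ∈ V, ∃ z : ℤ, v i = z := fun v hv => hl v hv i
      choose! z hz using hl'
      refine ⟨∑ v ∈ V, z v, ?_⟩
      rw [Finset.sum_apply]
      push_cast
      exact Finset.sum_congr rfl fun v hv => hz v hv
  refine ⟨key.1, ?_⟩
  have := key.2
  unfold IsHollow at this
  push Not at this
  exact this

lemma vectorSpan_smul_eq {d : ℕ} (S : Set (Fin d → ℝ)) {r : ℝ} (hr : r ≠ 0) :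
    vectorSpan ℝ (r • S) = vectorSpan ℝ S := by
  have := AffineMap.map_vectorSpan (s := S)
    ((r • (LinearMap.id : (Fin d → ℝ) →ₗ[ℝ] (Fin d → ℝ))).toAffineMap)
  have e : ((r • (LinearMap.id : (Fin d → ℝ) →ₗ[ℝ] (Fin d → ℝ))).toAffineMap) '' S = r • S := by
    rw [← Set.image_smul]; rfl
  rw [e] at this
  rw [← this]
  simp only [LinearMap.toAffineMap_linear]
  rw [Submodule.map_smul _ _ _ hr, Submodule.map_id]

lemma polyDim_eq {d : ℕ} (S : Set (Fin d → ℝ)) :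
    polyDim S = Module.finrank ℝ (vectorSpan ℝ S) := by
  rw [polyDim, direction_affineSpan]

lemma polyDim_smul {d : ℕ} (S : Set (Fin d → ℝ)) {r : ℝ} (hr : r ≠ 0) :
    polyDim (r • S) = polyDim S := by
  rw [polyDim_eq, polyDim_eq, vectorSpan_smul_eq S hr]

/-- facet functional -/
structure FF {d : ℕ} (P : Set (Fin d → ℝ)) (φ : (Fin d → ℝ) →ᵃ[ℝ] ℝ) : Prop where
  nonneg : ∀ p ∈ P, 0 ≤ φ p
  ne : ∃ p ∈ P, φ p ≠ 0
  zero : ∃ v ∈ P, IsLatticePt v ∧ φ v = 0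
  ker : ∀ w ∈ vectorSpan ℝ P, φ.linear w = 0 → w ∈ vectorSpan ℝ {p ∈ P | φ p = 0}

lemma lin_sub {d : ℕ} (φ : (Fin d → ℝ) →ᵃ[ℝ] ℝ) (p q : Fin d → ℝ) :
    φ.linear (p - q) = φ p - φ q := by
  simpa using φ.linearMap_vsub p q

/-- codim one lemma -/
lemma finrank_ker {d : ℕ} (W : Submodule ℝ (Fin d → ℝ)) (l : (Fin d → ℝ) →ₗ[ℝ] ℝ)
    (h : ∃ w ∈ W, l w ≠ 0) :
    Module.finrank ℝ (W ⊓ LinearMap.ker l : Submodule ℝ (Fin d → ℝ)) + 1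
      = Module.finrank ℝ W := by
  have h1 := LinearMap.finrank_range_add_finrank_ker (l.domRestrict W)
  have h2 : LinearMap.range (l.domRestrict W) = ⊤ := by
    rw [LinearMap.range_eq_top]
    obtain ⟨w, hw, hl⟩ := h
    intro t
    refine ⟨(t / l w) • ⟨w, hw⟩, ?_⟩
    simp [hl]
  rw [h2, finrank_top, Module.finrank_self] at h1
  have h3 : (LinearMap.ker (l.domRestrict W)).map W.subtype = W ⊓ LinearMap.ker l := by
    ext x
    simp [LinearMap.domRestrict_apply]
    constructor
    · rintro ⟨hx, hl⟩; exact ⟨hl, hx⟩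
    · rintro ⟨hl, hx⟩; exact ⟨hx, hl⟩
  rw [← h3, Submodule.finrank_map_subtype_eq]
  omega

lemma vectorSpan_zero_le {d : ℕ} (S : Set (Fin d → ℝ)) (φ : (Fin d → ℝ) →ᵃ[ℝ] ℝ) (t : ℝ)
    (h : ∀ s ∈ S, φ s = t) : vectorSpan ℝ S ≤ LinearMap.ker φ.linear := by
  rw [vectorSpan, Submodule.span_le]
  rintro _ ⟨a, ha, b, hb, rfl⟩
  change φ.linear (a - b) = 0
  rw [lin_sub, h a ha, h b hb, sub_self]

lemma FF.exists_lin {d : ℕ} {P : Set (Fin d → ℝ)} {φ : (Fin d → ℝ) →ᵃ[ℝ] ℝ} (h : FF P φ) :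
    ∃ w ∈ vectorSpan ℝ P, φ.linear w ≠ 0 := by
  obtain ⟨p, hp, hne⟩ := h.ne
  obtain ⟨v, hv, _, hz⟩ := h.zero
  refine ⟨p - v, vsub_mem_vectorSpan ℝ hp hv, ?_⟩
  rw [lin_sub, hz, sub_zero]
  exact hne

lemma FF.isFacet {d : ℕ} {P : Set (Fin d → ℝ)} {φ : (Fin d → ℝ) →ᵃ[ℝ] ℝ} (h : FF P φ)
    {r : ℝ} (hr : 0 < r) : IsFacet (r • P) (r • {p ∈ P | φ p = 0}) := by
  obtain ⟨v, hv, _, hz⟩ := h.zero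
  refine ⟨?_, ?_, ?_⟩
  · intro _
    refine ⟨-(LinearMap.toContinuousLinearMap φ.linear), ?_⟩
    have hlin : ∀ x y, φ.linear (r • x) - φ.linear (r • y) = r * (φ x - φ y) := by
      intro x y
      rw [← map_sub, ← smul_sub, map_smul, lin_sub, smul_eq_mul]
    ext x
    constructor
    · rintro ⟨p, ⟨hp, hp0⟩, rfl⟩
      refine ⟨Set.smul_mem_smul_set hp, ?_⟩
      rintro _ ⟨q, hq, rfl⟩
      have := hlin q p
      have h2 := h.nonneg q hq
      simp only [neg_apply, LinearMap.coe_toContinuousLinearMap']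
      have : 0 ≤ r * (φ q - φ p) := by rw [hp0, sub_zero]; positivity
      linarith
    · rintro ⟨⟨p, hp, rfl⟩, hmax⟩
      refine Set.smul_mem_smul_set ⟨hp, ?_⟩
      have := hmax (r • v) (Set.smul_mem_smul_set hv)
      simp only [neg_apply, LinearMap.coe_toContinuousLinearMap'] at this
      have h1 := hlin p v
      rw [hz, sub_zero] at h1
      have h2 := h.nonneg p hp
      have h3 : r * φ p ≤ 0 := by linarith
      nlinarith
  · exact ⟨r • v, Set.smul_mem_smul_set ⟨hv, hz⟩⟩
  · rw [polyDim_smul _ hr.ne', polyDim_smul _ hr.ne', polyDim_eq, polyDim_eq,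
      ← finrank_ker (vectorSpan ℝ P) φ.linear h.exists_lin]
    have : vectorSpan ℝ {p ∈ P | φ p = 0} = vectorSpan ℝ P ⊓ LinearMap.ker φ.linear := by
      apply le_antisymm
      · exact le_inf (vectorSpan_mono ℝ (fun x hx => hx.1))
          (vectorSpan_zero_le _ φ 0 fun s hs => hs.2)
      · rintro w ⟨hw, hw0⟩
        exact h.ker w hw hw0
    rw [this]

lemma zero_vertex {d : ℕ} (V : Finset (Fin d → ℝ)) (φ : (Fin d → ℝ) →ᵃ[ℝ] ℝ)
    (h0 : ∀ v ∈ V, 0 ≤ φ v) {p} (hp : p ∈ convexHull ℝ (V : Set (Fin d → ℝ))) (hφ : φ p = 0) :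
    ∃ v ∈ V, φ v = 0 := by
  by_contra hc
  push Not at hc
  have hconv : Convex ℝ (φ ⁻¹' Set.Ioi 0) := (convex_Ioi 0).affine_preimage φ
  have : convexHull ℝ (V : Set (Fin d → ℝ)) ⊆ φ ⁻¹' Set.Ioi 0 :=
    convexHull_min (fun v hv => lt_of_le_of_ne (h0 v hv) (Ne.symm (hc v hv))) hconv
  have := this hp
  simp [hφ] at this

lemma nonneg_hull {d : ℕ} (V : Set (Fin d → ℝ)) (φ : (Fin d → ℝ) →ᵃ[ℝ] ℝ)
    (h0 : ∀ v ∈ V, 0 ≤ φ v) {p} (hp : p ∈ convexHull ℝ V) : 0 ≤ φ p := by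
  have hconv : Convex ℝ (φ ⁻¹' Set.Ici 0) := (convex_Ici 0).affine_preimage φ
  exact convexHull_min (fun v hv => h0 v hv) hconv hp

lemma improve {d : ℕ} (V : Finset (Fin d → ℝ)) (hl : ∀ v ∈ V, IsLatticePt v)
    {e : Fin d → ℝ} (he : e ∈ vectorSpan ℝ (V : Set (Fin d → ℝ)))
    (φ : (Fin d → ℝ) →ᵃ[ℝ] ℝ) (h0 : ∀ v ∈ V, 0 ≤ φ v) (hz : ∃ v ∈ V, φ v = 0)
    (hd : φ.linear e < 0) :
    FF (convexHull ℝ (V : Set (Fin d → ℝ))) φ ∨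
    ∃ φ' : (Fin d → ℝ) →ᵃ[ℝ] ℝ, (∀ v ∈ V, 0 ≤ φ' v) ∧ (∃ v ∈ V, φ' v = 0) ∧ φ'.linear e < 0 ∧
      (V.filter (fun v => φ v = 0)).card < (V.filter (fun v => φ' v = 0)).card := by
  have hspan : vectorSpan ℝ (convexHull ℝ (V : Set (Fin d → ℝ)))
      = vectorSpan ℝ (V : Set (Fin d → ℝ)) := by
    rw [← direction_affineSpan, affineSpan_convexHull, direction_affineSpan]
  by_cases hk : ∀ w ∈ vectorSpan ℝ (V : Set (Fin d → ℝ)), φ.linear w = 0 →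
      w ∈ vectorSpan ℝ {v | v ∈ V ∧ φ v = 0}
  · left
    obtain ⟨z, hzV, hz0⟩ := hz
    refine ⟨fun p hp => nonneg_hull _ φ h0 hp, ?_, ⟨z, subset_convexHull ℝ _ hzV, hl z hzV, hz0⟩, ?_⟩
    · by_contra hc
      push Not at hc
      have := vectorSpan_zero_le _ φ 0 (fun s hs => hc s (subset_convexHull ℝ _ hs)) he
      rw [LinearMap.mem_ker] at this
      linarith
    · intro w hw hw0
      rw [hspan] at hw
      have hss : {v | v ∈ V ∧ φ v = 0} ⊆
          {p | p ∈ convexHull ℝ (V : Set (Fin d → ℝ)) ∧ φ p = 0} :=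
        fun v hv => ⟨subset_convexHull ℝ _ hv.1, hv.2⟩
      exact vectorSpan_mono ℝ hss (hk w hw hw0)
  · right
    push Not at hk
    obtain ⟨w, hw, hw0, hwn⟩ := hk
    obtain ⟨z, hzV, hz0⟩ := hz
    obtain ⟨g, hgw, hg⟩ := Submodule.exists_le_ker_of_notMem hwn
    -- the perturbation
    obtain ⟨ψ, hψZ, hψe, hψneg⟩ : ∃ ψ : (Fin d → ℝ) →ᵃ[ℝ] ℝ, (∀ v ∈ V, φ v = 0 → ψ v = 0) ∧
        ψ.linear e = 0 ∧ ∃ v ∈ V, ψ v < 0 := by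
      set ψ : (Fin d → ℝ) →ᵃ[ℝ] ℝ :=
        g.toAffineMap - AffineMap.const ℝ _ (g z) - (g e / φ.linear e) • φ with hψ
      have hψv : ∀ v, ψ v = g v - g z - (g e / φ.linear e) * φ v := by
        intro v; simp [hψ]
      have hψl : ∀ v, ψ.linear v = g v - (g e / φ.linear e) * φ.linear v := by
        intro v; simp [hψ]
      have hZ : ∀ v ∈ V, φ v = 0 → ψ v = 0 := by
        intro v hv hv0
        have : v - z ∈ vectorSpan ℝ {v | v ∈ V ∧ φ v = 0} :=
          vsub_mem_vectorSpan ℝ (show v ∈ {v | v ∈ V ∧ φ v = 0} from ⟨hv, hv0⟩) ⟨hzV, hz0⟩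
        have := hg this
        rw [LinearMap.mem_ker, map_sub] at this
        rw [hψv, this, hv0]; simp
      have hE : ψ.linear e = 0 := by
        rw [hψl, div_mul_cancel₀ _ hd.ne, sub_self]
      have hN : ∃ v ∈ V, ψ v ≠ 0 := by
        by_contra hc
        push Not at hc
        have := vectorSpan_zero_le _ ψ 0 (fun s hs => hc s hs) hw
        rw [LinearMap.mem_ker, hψl, hw0, mul_zero, sub_zero] at this
        exact hgw this
      obtain ⟨v, hv, hne⟩ := hN
      rcases lt_or_gt_of_ne hne with h | h
      · exact ⟨ψ, hZ, hE, v, hv, h⟩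
      · exact ⟨-ψ, fun v hv h => by simp [hZ v hv h], by simp [hE], v, hv, by simpa using h⟩
    have hne : (V.filter (fun v => ψ v < 0)).Nonempty := by
      obtain ⟨v, hv, h⟩ := hψneg
      exact ⟨v, Finset.mem_filter.2 ⟨hv, h⟩⟩
    obtain ⟨v1, hv1, hmin⟩ := Finset.exists_min_image _ (fun v => φ v / (-ψ v)) hne
    rw [Finset.mem_filter] at hv1
    set t := φ v1 / (-ψ v1) with ht
    have htn : 0 ≤ t := div_nonneg (h0 v1 hv1.1) (by linarith [hv1.2])
    have hval : ∀ v, (φ + t • ψ) v = φ v + t * ψ v := by intro v; simp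
    have hv10 : (φ + t • ψ) v1 = 0 := by
      rw [hval, ht]
      have := hv1.2.ne
      field_simp; ring
    refine ⟨φ + t • ψ, ?_, ⟨v1, hv1.1, hv10⟩, by simp [hψe, hd], ?_⟩
    · intro v hv
      rw [hval]
      by_cases hneg : ψ v < 0
      · have := hmin v (Finset.mem_filter.2 ⟨hv, hneg⟩)
        rw [le_div_iff₀ (by linarith)] at this
        linarith
      · have := h0 v hv
        push Not at hneg
        positivity
    · apply Finset.card_lt_card
      rw [Finset.ssubset_iff_of_subset]
      · refine ⟨v1, Finset.mem_filter.2 ⟨hv1.1, hv10⟩, fun h => ?_⟩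
        have := hψZ v1 hv1.1 (Finset.mem_filter.1 h).2
        linarith [hv1.2]
      · intro v hv
        rw [Finset.mem_filter] at hv ⊢
        exact ⟨hv.1, by rw [hval, hv.2, hψZ v hv.1 hv.2]; simp⟩

lemma exists_FF {d : ℕ} (V : Finset (Fin d → ℝ)) (hV : V.Nonempty) (hl : ∀ v ∈ V, IsLatticePt v)
    {e : Fin d → ℝ} (he : e ∈ vectorSpan ℝ (V : Set (Fin d → ℝ))) (hne : e ≠ 0) :
    ∃ φ, FF (convexHull ℝ (V : Set (Fin d → ℝ))) φ ∧ φ.linear e < 0 := by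
  by_contra hc
  push Not at hc
  have key : ∀ k : ℕ, ∃ φ : (Fin d → ℝ) →ᵃ[ℝ] ℝ, (∀ v ∈ V, 0 ≤ φ v) ∧ (∃ v ∈ V, φ v = 0) ∧
      φ.linear e < 0 ∧ k ≤ (V.filter (fun v => φ v = 0)).card := by
    intro k
    induction k with
    | zero =>
      obtain ⟨g, hg, -⟩ := Submodule.exists_le_ker_of_notMem
        (p := (⊥ : Submodule ℝ (Fin d → ℝ))) (v := e) (by simpa using hne)
      obtain ⟨f, hf⟩ : ∃ f : (Fin d → ℝ) →ₗ[ℝ] ℝ, 0 < f e := by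
        rcases lt_or_gt_of_ne hg with h | h
        · exact ⟨-g, by simpa using h⟩
        · exact ⟨g, h⟩
      obtain ⟨v, hv, hmax⟩ := Finset.exists_max_image V f hV
      refine ⟨AffineMap.const ℝ _ (f v) - f.toAffineMap, ?_, ⟨v, hv, by simp⟩, by simpa using hf,
        Nat.zero_le _⟩
      intro w hw
      simpa using hmax w hw
    | succ k ih =>
      obtain ⟨φ, h0, hz, hd, hk⟩ := ih
      rcases improve V hl he φ h0 hz hd with h | ⟨φ', a, b, c, h⟩
      · exact absurd (hc φ h) (not_le.2 hd)
      · exact ⟨φ', a, b, c, by omega⟩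
  obtain ⟨φ, -, -, -, h⟩ := key (V.card + 1)
  have := Finset.card_filter_le V (fun v => φ v = 0)
  omega

lemma IsLatticePt.add {d : ℕ} {x y : Fin d → ℝ} (hx : IsLatticePt x) (hy : IsLatticePt y) :
    IsLatticePt (x + y) := fun i => by
  obtain ⟨a, ha⟩ := hx i
  obtain ⟨b, hb⟩ := hy i
  exact ⟨a + b, by simp [ha, hb]⟩

lemma IsLatticePt.sub {d : ℕ} {x y : Fin d → ℝ} (hx : IsLatticePt x) (hy : IsLatticePt y) :
    IsLatticePt (x - y) := fun i => by
  obtain ⟨a, ha⟩ := hx i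
  obtain ⟨b, hb⟩ := hy i
  exact ⟨a - b, by simp [ha, hb]⟩

lemma IsLatticePt.nsmul {d : ℕ} {x : Fin d → ℝ} (hx : IsLatticePt x) (k : ℕ) :
    IsLatticePt ((k : ℝ) • x) := fun i => by
  obtain ⟨a, ha⟩ := hx i
  exact ⟨k * a, by simp [ha]⟩

lemma smul_mem_affineSpan {d : ℕ} {S : Set (Fin d → ℝ)} {r : ℝ} {p : Fin d → ℝ}
    (hp : p ∈ affineSpan ℝ S) : r • p ∈ affineSpan ℝ (r • S) := by
  have := AffineSubspace.map_span
    ((r • (LinearMap.id : (Fin d → ℝ) →ₗ[ℝ] (Fin d → ℝ))).toAffineMap) S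
  have e : ((r • (LinearMap.id : (Fin d → ℝ) →ₗ[ℝ] (Fin d → ℝ))).toAffineMap) '' S = r • S := by
    rw [← Set.image_smul]; rfl
  rw [e] at this
  rw [← this]
  exact ⟨p, hp, rfl⟩

/-- the formula for `u` in terms of a facet functional -/
lemma facet_ineq {d : ℕ} {P : Set (Fin d → ℝ)} {φ : (Fin d → ℝ) →ᵃ[ℝ] ℝ} (h : FF P φ)
    {r c : ℕ} (hr : 0 < r) (hc : 0 < c) {p0 p1 : Fin d → ℝ}
    (hp0 : p0 ∈ P) (hp1 : p1 ∈ P) (h0 : 0 < φ p0) (h1 : 0 < φ p1)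
    (hx1 : IsLatticePt ((c : ℝ) • p1))
    (u : (Fin d → ℝ) →ᵃ[ℝ] ℝ) (hu : IsIntegralOn ((r : ℝ) • P) u)
    (hu1 : ∀ f ∈ (r : ℝ) • {p ∈ P | φ p = 0}, u f = u ((r : ℝ) • p0) + 1) :
    r * φ p0 ≤ c * φ p1 := by
  obtain ⟨v, hv, hvl, hvz⟩ := h.zero
  have hr' : (0 : ℝ) < r := by exact_mod_cast hr
  have hc' : (0 : ℝ) < c := by exact_mod_cast hc
  have hsub : ∀ w ∈ vectorSpan ℝ P, φ.linear w = 0 → u.linear w = 0 := by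
    intro w hw hw0
    have h1 := h.ker w hw hw0
    rw [← vectorSpan_smul_eq _ hr'.ne'] at h1
    exact vectorSpan_zero_le _ u _ hu1 h1
  have hp1v : p1 - v ∈ vectorSpan ℝ P := vsub_mem_vectorSpan ℝ hp1 hv
  have hp0v : p0 - v ∈ vectorSpan ℝ P := vsub_mem_vectorSpan ℝ hp0 hv
  have hA : u.linear (p1 - v) = (φ p1 / φ p0) * u.linear (p0 - v) := by
    have := hsub ((p1 - v) - (φ p1 / φ p0) • (p0 - v))
      (Submodule.sub_mem _ hp1v (Submodule.smul_mem _ _ hp0v))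
      (by rw [map_sub, map_smul, lin_sub, lin_sub, hvz]; simp; field_simp; simp)
    rw [map_sub, map_smul, smul_eq_mul] at this
    linarith
  have hrv := hu1 _ (Set.smul_mem_smul_set ⟨hv, hvz⟩)
  have hB : r * u.linear (p0 - v) = -1 := by
    rw [← smul_eq_mul, ← map_smul, smul_sub, lin_sub, hrv]; ring
  have hlat : IsLatticePt ((c : ℝ) • p1 - (c : ℝ) • v + (r : ℝ) • v) :=
    (hx1.sub (hvl.nsmul c)).add (hvl.nsmul r)
  have hmem : (c : ℝ) • p1 - (c : ℝ) • v + (r : ℝ) • v ∈ affineSpan ℝ ((r : ℝ) • P) := by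
    have : AffineMap.lineMap v p1 ((c : ℝ) / r) ∈ affineSpan ℝ P :=
      AffineMap.lineMap_mem _ (subset_affineSpan ℝ P hv) (subset_affineSpan ℝ P hp1)
    convert smul_mem_affineSpan (r := (r : ℝ)) this using 1
    ext i
    simp [AffineMap.lineMap_apply]
    field_simp
  obtain ⟨z1, hz1⟩ := hu _ hmem hlat
  obtain ⟨z2, hz2⟩ := hu _ (smul_mem_affineSpan (subset_affineSpan ℝ P hv)) (hvl.nsmul r)
  have hD : u ((c : ℝ) • p1 - (c : ℝ) • v + (r : ℝ) • v) - u ((r : ℝ) • v)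
      = c * u.linear (p1 - v) := by
    rw [← lin_sub, ← smul_eq_mul, ← map_smul]
    congr 1
    ext i; simp; ring
  have hE : ((z2 - z1 : ℤ) : ℝ) = c * φ p1 / (r * φ p0) := by
    push_cast
    rw [← hz1, ← hz2]
    have e2 : u.linear (p0 - v) = -1 / r := by field_simp; linarith
    rw [hA, e2] at hD
    have : u ((r : ℝ) • v) - u ((c : ℝ) • p1 - (c : ℝ) • v + (r : ℝ) • v) =
      -(c * (φ p1 / φ p0 * (-1 / r))) := by linarith
    rw [this]
    field_simp
  have hpos : (0 : ℝ) < ((z2 - z1 : ℤ) : ℝ) := by rw [hE]; positivity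
  have h1' : (1 : ℝ) ≤ ((z2 - z1 : ℤ) : ℝ) := by
    have : 0 < z2 - z1 := by exact_mod_cast hpos
    exact_mod_cast this
  rw [hE, le_div_iff₀ (by positivity)] at h1'
  linarith

lemma facet_lift {N n : ℕ} (V : Finset (Fin N → ℝ)) (hl : ∀ v ∈ V, IsLatticePt v)
    {P : Set (Fin N → ℝ)} (hPV : P = convexHull ℝ (V : Set (Fin N → ℝ)))
    {A B : Set (Fin n → ℝ)} (jF jG : (Fin n → ℝ) →ᵃ[ℝ] (Fin N → ℝ))
    (hP : P = convexHull ℝ (jF '' A ∪ jG '' B)) (hBn : B.Nonempty)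
    (hdim : polyDim A + polyDim B + 1 = polyDim P)
    {F1 : Set (Fin n → ℝ)} (hF1 : IsFacet A F1) :
    ∃ φ, FF P φ ∧ (∀ x ∈ F1, φ (jF x) = 0) ∧ ∀ q ∈ B, φ (jG q) = 0 := by
  obtain ⟨hex, ⟨f1, hf1⟩, hd1⟩ := hF1
  obtain ⟨l, hlF⟩ := hex ⟨f1, hf1⟩
  obtain ⟨g0, hg0⟩ := hBn
  have hf1' := hf1
  rw [hlF] at hf1'
  obtain ⟨hf1A, hf1max⟩ := hf1'
  have hF1A : F1 ⊆ A := by rw [hlF]; exact fun x hx => hx.1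
  have hF1l : ∀ x ∈ F1, l x = l f1 := by
    intro x hx
    have hx' := hx
    rw [hlF] at hx'
    exact le_antisymm (hf1max x hx'.1) (hx'.2 f1 hf1A)
  set e : Fin N → ℝ := jG g0 - jF f1 with he
  set T : (vectorSpan ℝ A × vectorSpan ℝ B × ℝ) →ₗ[ℝ] (Fin N → ℝ) :=
    (jF.linear ∘ₗ (vectorSpan ℝ A).subtype).coprod
      ((jG.linear ∘ₗ (vectorSpan ℝ B).subtype).coprod (LinearMap.toSpanSingleton ℝ _ e)) with hT
  have hTv : ∀ u v t, T (u, v, t) = jF.linear u + (jG.linear v + t • e) := by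
    intro u v t; simp [hT]
  have hTF : ∀ x (hx : x ∈ A),
      T (⟨x - f1, vsub_mem_vectorSpan ℝ hx hf1A⟩, 0, 0) = jF x - jF f1 := by
    intro x hx
    rw [hTv]
    have := jF.linearMap_vsub x f1
    simp only [vsub_eq_sub] at this
    simp [this]
  have hTG : ∀ x (hx : x ∈ B),
      T (0, ⟨x - g0, vsub_mem_vectorSpan ℝ hx hg0⟩, 1) = jG x - jF f1 := by
    intro x hx
    rw [hTv]
    have := jG.linearMap_vsub x g0
    simp only [vsub_eq_sub] at this
    simp only [this, he]
    simp
  have hspan : vectorSpan ℝ P = vectorSpan ℝ (jF '' A ∪ jG '' B) := by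
    rw [hP, ← direction_affineSpan, affineSpan_convexHull, direction_affineSpan]
  have hle : vectorSpan ℝ P ≤ LinearMap.range T := by
    rw [hspan, vectorSpan_eq_span_vsub_set_right ℝ
      (show jF f1 ∈ jF '' A ∪ jG '' B from Or.inl ⟨f1, hf1A, rfl⟩), Submodule.span_le]
    rintro _ ⟨_, (⟨x, hx, rfl⟩ | ⟨x, hx, rfl⟩), rfl⟩
    · exact ⟨_, hTF x hx⟩
    · exact ⟨_, hTG x hx⟩
  have hker : LinearMap.ker T = ⊥ := by
    have h1 := LinearMap.finrank_range_add_finrank_ker T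
    have h2 := Submodule.finrank_mono hle
    rw [polyDim_eq, polyDim_eq, polyDim_eq] at hdim
    simp only [Module.finrank_prod, Module.finrank_self] at h1
    apply Submodule.finrank_eq_zero.1
    omega
  obtain ⟨ρ, hρ⟩ := LinearMap.exists_leftInverse_of_injective T hker
  have hρ' : ∀ x, ρ (T x) = x := fun x => LinearMap.congr_fun hρ x
  set lam : (Fin N → ℝ) →ₗ[ℝ] ℝ :=
    -((l : (Fin n → ℝ) →ₗ[ℝ] ℝ) ∘ₗ (vectorSpan ℝ A).subtype ∘ₗ LinearMap.fst ℝ _ _ ∘ₗ ρ) with hlam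
  have hlamT : ∀ u v t, lam (T (u, v, t)) = - l u := by
    intro u v t; simp [hlam, hρ']
  set φ : (Fin N → ℝ) →ᵃ[ℝ] ℝ := lam.toAffineMap - AffineMap.const ℝ _ (lam (jF f1)) with hφ
  have hφv : ∀ x, φ x = lam (x - jF f1) := by intro x; simp [hφ]
  have hφl : φ.linear = lam := by ext; simp [hφ]
  have hφF : ∀ x ∈ A, φ (jF x) = l f1 - l x := by
    intro x hx
    rw [hφv, ← hTF x hx, hlamT]; simp
  have hφG : ∀ x ∈ B, φ (jG x) = 0 := by
    intro x hx
    rw [hφv, ← hTG x hx, hlamT]; simp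
  have hφF1 : ∀ x ∈ F1, φ (jF x) = 0 := by
    intro x hx
    rw [hφF x (hF1A hx), hF1l x hx, sub_self]
  have hJ : jF '' A ∪ jG '' B ⊆ P := by rw [hP]; exact subset_convexHull ℝ _
  have hnn : ∀ p ∈ P, 0 ≤ φ p := by
    intro p hp
    rw [hP] at hp
    refine nonneg_hull _ φ ?_ hp
    rintro _ (⟨x, hx, rfl⟩ | ⟨x, hx, rfl⟩)
    · rw [hφF x hx]; linarith [hf1max x hx]
    · rw [hφG x hx]
  have hexx : ∃ x ∈ A, l x ≠ l f1 := by
    by_contra hc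
    push Not at hc
    have : F1 = A := by
      apply Set.Subset.antisymm hF1A
      intro x hx
      rw [hlF]
      exact ⟨hx, fun y hy => by rw [hc x hx, hc y hy]⟩
    rw [this] at hd1
    omega
  refine ⟨φ, ⟨hnn, ?_, ?_, ?_⟩, hφF1, hφG⟩
  · obtain ⟨x, hx, hne⟩ := hexx
    refine ⟨jF x, hJ (Or.inl ⟨x, hx, rfl⟩), ?_⟩
    rw [hφF x hx]
    exact fun h => hne (by linarith)
  · have hpP : jF f1 ∈ P := hJ (Or.inl ⟨f1, hf1A, rfl⟩)
    have h0 : ∀ v ∈ V, 0 ≤ φ v := fun v hv => hnn v (by rw [hPV]; exact subset_convexHull ℝ _ hv)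
    rw [hPV] at hpP
    obtain ⟨v, hv, hv0⟩ := zero_vertex V φ h0 hpP (hφF1 f1 hf1)
    exact ⟨v, by rw [hPV]; exact subset_convexHull ℝ _ hv, hl v hv, hv0⟩
  · intro w hw hw0
    obtain ⟨⟨u, v, t⟩, rfl⟩ := hle hw
    rw [hφl, hlamT] at hw0
    have hu : (u : Fin n → ℝ) ∈ vectorSpan ℝ F1 := by
      have hF1le : vectorSpan ℝ F1 ≤ vectorSpan ℝ A ⊓ LinearMap.ker (l : (Fin n → ℝ) →ₗ[ℝ] ℝ) :=
        le_inf (vectorSpan_mono ℝ hF1A)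
          (vectorSpan_zero_le F1 (l : (Fin n → ℝ) →ₗ[ℝ] ℝ).toAffineMap (l f1) hF1l)
      have hfr := finrank_ker (vectorSpan ℝ A) (l : (Fin n → ℝ) →ₗ[ℝ] ℝ) (by
        obtain ⟨x, hx, hne⟩ := hexx
        refine ⟨x - f1, vsub_mem_vectorSpan ℝ hx hf1A, ?_⟩
        rw [map_sub]
        exact sub_ne_zero.2 hne)
      rw [polyDim_eq, polyDim_eq] at hd1
      rw [Submodule.eq_of_le_of_finrank_eq hF1le (by omega)]
      exact ⟨u.2, by simpa using hw0⟩
    set H := {p | p ∈ P ∧ φ p = 0} with hH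
    have hFH : jF '' F1 ⊆ H := by
      rintro _ ⟨x, hx, rfl⟩
      exact ⟨hJ (Or.inl ⟨x, hF1A hx, rfl⟩), hφF1 x hx⟩
    have hGH : jG '' B ⊆ H := by
      rintro _ ⟨x, hx, rfl⟩
      exact ⟨hJ (Or.inr ⟨x, hx, rfl⟩), hφG x hx⟩
    rw [hTv]
    refine Submodule.add_mem _ ?_ (Submodule.add_mem _ ?_ (Submodule.smul_mem _ _ ?_))
    · apply vectorSpan_mono ℝ hFH
      rw [← AffineMap.map_vectorSpan]
      exact Submodule.mem_map_of_mem hu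
    · apply vectorSpan_mono ℝ hGH
      rw [← AffineMap.map_vectorSpan]
      exact Submodule.mem_map_of_mem v.2
    · exact vsub_mem_vectorSpan ℝ (hGH ⟨g0, hg0, rfl⟩) (hFH ⟨f1, hf1, rfl⟩)

lemma core {N n : ℕ} (V : Finset (Fin N → ℝ)) (hV : V.Nonempty) (hl : ∀ v ∈ V, IsLatticePt v)
    {P : Set (Fin N → ℝ)} (hPV : P = convexHull ℝ (V : Set (Fin N → ℝ)))
    {r : ℕ} (hr : 0 < r) (href : IsReflexivePolytope ((r : ℝ) • P))
    {A B : Set (Fin n → ℝ)} (jF jG : (Fin n → ℝ) →ᵃ[ℝ] (Fin N → ℝ))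
    (hP : P = convexHull ℝ (jF '' A ∪ jG '' B))
    (hdim : polyDim A + polyDim B + 1 = polyDim P)
    {a b : ℕ} (ha : 0 < a) (hb : 0 < b) (hab : a + b ≤ r)
    (hA : ∀ y ∈ affineSpan ℝ A, IsLatticePt y → IsLatticePt ((a : ℝ) • jF y))
    (hB : ∀ y ∈ affineSpan ℝ B, IsLatticePt y → IsLatticePt ((b : ℝ) • jG y))
    {y z : Fin n → ℝ} (hy : y ∈ intrinsicInterior ℝ A) (hyl : IsLatticePt y)
    (hz : z ∈ intrinsicInterior ℝ B) (hzl : IsLatticePt z) :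
    IsReflexivePolytope A := by
  refine ⟨y, hy, hyl, fun F1 hF1 => ?_⟩
  obtain ⟨x, hx, hxl, hxf⟩ := href
  have hr' : (0 : ℝ) < r := by exact_mod_cast hr
  have ha' : (0 : ℝ) < a := by exact_mod_cast ha
  have hb' : (0 : ℝ) < b := by exact_mod_cast hb
  have hyA := intrinsicInterior_subset hy
  have hzB := intrinsicInterior_subset hz
  have hJ : jF '' A ∪ jG '' B ⊆ P := by rw [hP]; exact subset_convexHull ℝ _
  have hPc : Convex ℝ P := by rw [hP]; exact convex_convexHull ℝ _
  obtain ⟨p0, hp0, rfl⟩ := intrinsicInterior_subset hx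
  simp only at hx hxl hxf
  set c : ℕ := a + b with hc
  have hcR : (c : ℝ) = a + b := by rw [hc]; push_cast; rfl
  have hc0 : 0 < c := by omega
  have hcR0 : (0 : ℝ) < c := by exact_mod_cast hc0
  -- combination points
  have hcomb : ∀ p ∈ P, ∀ q ∈ P, ((a : ℝ) / c) • p + ((b : ℝ) / c) • q ∈ P := by
    intro p hp q hq
    exact hPc hp hq (by positivity) (by positivity) (by rw [hcR]; field_simp)
  have hφc : ∀ (φ : (Fin N → ℝ) →ᵃ[ℝ] ℝ) p q,
      φ (((a : ℝ) / c) • p + ((b : ℝ) / c) • q) = (a : ℝ) / c * φ p + (b : ℝ) / c * φ q := by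
    intro φ p q
    have e1 : ((a : ℝ) / c) = 1 - b / c := by rw [hcR]; field_simp; ring
    have : ((a : ℝ) / c) • p + ((b : ℝ) / c) • q = AffineMap.lineMap p q ((b : ℝ) / c) := by
      rw [e1, AffineMap.lineMap_apply_module]
    rw [this, AffineMap.apply_lineMap, AffineMap.lineMap_apply_module, e1]
    rfl
  set p1 := ((a : ℝ) / c) • jF y + ((b : ℝ) / c) • jG z with hp1
  have hyP : jF y ∈ P := hJ (Or.inl ⟨y, hyA, rfl⟩)
  have hzP : jG z ∈ P := hJ (Or.inr ⟨z, hzB, rfl⟩)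
  have hp1P : p1 ∈ P := hcomb _ hyP _ hzP
  have hcp : ∀ p q : Fin N → ℝ, (c : ℝ) • (((a : ℝ) / c) • p + ((b : ℝ) / c) • q)
      = (a : ℝ) • p + (b : ℝ) • q := by
    intro p q
    rw [smul_add, smul_smul, smul_smul, mul_div_cancel₀ _ hcR0.ne', mul_div_cancel₀ _ hcR0.ne']
  have hp1l : IsLatticePt ((c : ℝ) • p1) := by
    rw [hp1, hcp]
    exact (hA y (subset_affineSpan ℝ _ hyA) hyl).add (hB z (subset_affineSpan ℝ _ hzB) hzl)
  -- positivity
  have hpos0 : ∀ φ, FF P φ → 0 < φ p0 := by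
    intro φ h
    refine lt_of_le_of_ne (h.nonneg p0 hp0) fun h0 => ?_
    obtain ⟨p, hp, hne⟩ := h.ne
    have := relint_zero hx
      (φ.comp (((r : ℝ)⁻¹ • (LinearMap.id : (Fin N → ℝ) →ₗ[ℝ] (Fin N → ℝ))).toAffineMap))
      (by rintro _ ⟨q, hq, rfl⟩; simpa [smul_smul, hr'.ne'] using h.nonneg q hq)
      (by simp [smul_smul, hr'.ne', ← h0]) _ (Set.smul_mem_smul_set hp)
    simp [smul_smul, hr'.ne'] at this
    exact hne this
  have hpos1 : ∀ φ, FF P φ → 0 < φ p1 := by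
    intro φ h
    refine lt_of_le_of_ne (h.nonneg p1 hp1P) fun h0 => ?_
    rw [hp1, hφc] at h0
    have h1 := h.nonneg _ hyP
    have h2 := h.nonneg _ hzP
    have hac : 0 < (a : ℝ) / c := by positivity
    have hbc : 0 < (b : ℝ) / c := by positivity
    have h3 : φ (jF y) = 0 := by nlinarith [mul_nonneg hac.le h1, mul_nonneg hbc.le h2]
    have h4 : φ (jG z) = 0 := by nlinarith [mul_nonneg hac.le h1, mul_nonneg hbc.le h2]
    have h5 := relint_zero hy (φ.comp jF) (fun s hs => h.nonneg _ (hJ (Or.inl ⟨s, hs, rfl⟩))) h3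
    have h6 := relint_zero hz (φ.comp jG) (fun s hs => h.nonneg _ (hJ (Or.inr ⟨s, hs, rfl⟩))) h4
    obtain ⟨p, hp, hne⟩ := h.ne
    apply hne
    rw [hP] at hp
    have h7 : 0 ≤ (-φ) p := by
      refine nonneg_hull _ (-φ) ?_ hp
      rintro _ (⟨s, hs, rfl⟩ | ⟨s, hs, rfl⟩)
      · have := h5 s hs
        simp at this; simp [this]
      · have := h6 s hs
        simp at this; simp [this]
    have h8 := h.nonneg p (by rw [hP]; exact hp)
    simp at h7
    linarith
  have hineq : ∀ φ, FF P φ → r * φ p0 ≤ c * φ p1 := by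
    intro φ h
    obtain ⟨u, hu, hu1⟩ := hxf _ (h.isFacet hr')
    exact facet_ineq h hr hc0 hp0 hp1P (hpos0 φ h) (hpos1 φ h) hp1l u hu hu1
  have hcr : (c : ℝ) ≤ r := by exact_mod_cast hab
  have hpp : p1 = p0 := by
    by_contra hne
    have hmem : p1 - p0 ∈ vectorSpan ℝ (V : Set (Fin N → ℝ)) := by
      have : p1 - p0 ∈ vectorSpan ℝ P := vsub_mem_vectorSpan ℝ hp1P hp0
      rwa [hPV, ← direction_affineSpan, affineSpan_convexHull, direction_affineSpan] at this
    obtain ⟨φ, hφ, hneg⟩ := exists_FF V hV hl hmem (sub_ne_zero.2 hne)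
    rw [← hPV] at hφ
    rw [lin_sub] at hneg
    have h1 := hineq φ hφ
    have h2 := hpos0 φ hφ
    nlinarith
  obtain ⟨φ, hφ, hφF, hφG⟩ := facet_lift V hl hPV jF jG hP ⟨z, hzB⟩ hdim hF1
  have hceq : (c : ℝ) = r := by
    have h1 := hineq φ hφ
    have h2 := hpos0 φ hφ
    rw [hpp] at h1
    exact le_antisymm hcr (le_of_mul_le_mul_right h1 h2)
  obtain ⟨u, hu, hu1⟩ := hxf _ (hφ.isFacet hr')
  refine ⟨u.comp ((a : ℝ) • jF + AffineMap.const ℝ _ ((b : ℝ) • jG z)), ?_, ?_⟩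
  · intro p hp hpl
    have hl2 := (hA p hp hpl).add (hB z (subset_affineSpan ℝ _ hzB) hzl)
    refine hu _ ?_ (by simpa using hl2)
    have hjp : jF p ∈ affineSpan ℝ P := by
      have h1 : jF p ∈ (affineSpan ℝ A).map jF := ⟨p, hp, rfl⟩
      rw [AffineSubspace.map_span] at h1
      exact affineSpan_mono ℝ (Set.subset_union_left.trans hJ) h1
    have hm : AffineMap.lineMap (jF p) (jG z) ((b : ℝ) / c) ∈ affineSpan ℝ P :=
      AffineMap.lineMap_mem _ hjp (subset_affineSpan ℝ _ hzP)
    have e1 : 1 - (b : ℝ) / c = a / c := by rw [hcR]; field_simp; ring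
    rw [AffineMap.lineMap_apply_module, e1] at hm
    have := smul_mem_affineSpan (r := (r : ℝ)) hm
    rw [← hceq, hcp, hceq] at this
    simpa using this
  · intro f hf
    have hfA : f ∈ A := hF1.1.subset hf
    have hm := hu1 ((r : ℝ) • (((a : ℝ) / c) • jF f + ((b : ℝ) / c) • jG z))
      (Set.smul_mem_smul_set ⟨hcomb _ (hJ (Or.inl ⟨f, hfA, rfl⟩)) _ hzP, by
        rw [hφc, hφF f hf, hφG z hzB]; simp⟩)
    rw [← hpp, hp1, ← hceq, hcp, hcp] at hm
    simpa using hm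

lemma append_lattice {n : ℕ} {x : Fin n → ℝ} (hx : IsLatticePt x) {s : Fin 2 → ℝ}
    (hs : IsLatticePt s) : IsLatticePt (Fin.append x s) := by
  intro i
  refine Fin.addCases (fun j => ?_) (fun j => ?_) i
  · simpa using hx j
  · simpa using hs j

/-- the affine embedding `x ↦ (x, s)` -/
def appendAff {n : ℕ} (s : Fin 2 → ℝ) : (Fin n → ℝ) →ᵃ[ℝ] (Fin (n + 2) → ℝ) where
  toFun x := Fin.append x s
  linear :=
    { toFun := fun x => Fin.append x 0
      map_add' := fun x y => by
        ext i
        refine Fin.addCases (fun j => ?_) (fun j => ?_) i <;> simp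
      map_smul' := fun t x => by
        ext i
        refine Fin.addCases (fun j => ?_) (fun j => ?_) i <;> simp }
  map_vadd' p v := by
    ext i
    refine Fin.addCases (fun j => ?_) (fun j => ?_) i <;> simp

lemma scaled_lattice {N n : ℕ} {F : Set (Fin n → ℝ)} (hF : IsLatticePolytope F)
    (i : (Fin n → ℝ) →ᵃ[ℝ] (Fin N → ℝ))
    (hi : ∀ x ∈ affineSpan ℝ F, IsLatticePt x → IsLatticePt (i x)) {a : ℕ} (ha : 0 < a) :
    ∀ y ∈ affineSpan ℝ ((a : ℝ) • F), IsLatticePt y →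
      IsLatticePt ((a : ℝ) • (i.comp
        (((a : ℝ)⁻¹ • (LinearMap.id : (Fin n → ℝ) →ₗ[ℝ] (Fin n → ℝ))).toAffineMap)) y) := by
  intro y hy hyl
  have ha' : (a : ℝ) ≠ 0 := by exact_mod_cast ha.ne'
  obtain ⟨W, ⟨v, hv⟩, hWl, rfl⟩ := hF
  set F := convexHull ℝ (W : Set (Fin n → ℝ))
  have hvF : v ∈ F := subset_convexHull ℝ _ hv
  have hvl := hWl v hv
  have hy2 : (a : ℝ)⁻¹ • y ∈ affineSpan ℝ F := by
    have := smul_mem_affineSpan (r := (a : ℝ)⁻¹) hy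
    rwa [smul_smul, inv_mul_cancel₀ ha', one_smul] at this
  have hm : AffineMap.lineMap v ((a : ℝ)⁻¹ • y) (a : ℝ) ∈ affineSpan ℝ F :=
    AffineMap.lineMap_mem _ (subset_affineSpan ℝ _ hvF) hy2
  have e : AffineMap.lineMap v ((a : ℝ)⁻¹ • y) (a : ℝ) = (y - (a : ℝ) • v) + v := by
    ext j
    simp [AffineMap.lineMap_apply]
    field_simp
  have h1 := hi _ hm (by rw [e]; exact (hyl.sub (hvl.nsmul a)).add hvl)
  have h2 := hi v (subset_affineSpan ℝ _ hvF) hvl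
  have h3 := (h1.add (h2.nsmul a)).sub h2
  convert h3 using 1
  rw [AffineMap.apply_lineMap]
  ext j
  simp [AffineMap.lineMap_apply]
  ring

lemma scaled_image {N n : ℕ} (F : Set (Fin n → ℝ))
    (i : (Fin n → ℝ) →ᵃ[ℝ] (Fin N → ℝ)) {a : ℕ} (ha : 0 < a) :
    (i.comp (((a : ℝ)⁻¹ • (LinearMap.id : (Fin n → ℝ) →ₗ[ℝ] (Fin n → ℝ))).toAffineMap))
      '' ((a : ℝ) • F) = i '' F := by
  have ha' : (a : ℝ) ≠ 0 := by exact_mod_cast ha.ne'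
  rw [← Set.image_smul, Set.image_image]
  refine Set.image_congr fun x _ => ?_
  simp [smul_smul, ha']

/-- If a Gorenstein polytope `P` is a Cayley join of lattice polytopes `F` and `G` with
`codeg F + codeg G = codeg P`, then `F` and `G` are Gorenstein polytopes. -/
theorem stmt13 {N n : ℕ} (P : Set (Fin N → ℝ)) (F G : Set (Fin n → ℝ))
    (hP : IsLatticePolytope P) (hF : IsLatticePolytope F) (hG : IsLatticePolytope G)
    (hGor : IsGorenstein P) (hjoin : IsCayleyJoin P F G)
    (hcodeg : polyCodeg F + polyCodeg G = polyCodeg P) :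
    IsGorenstein F ∧ IsGorenstein G := by
  obtain ⟨r, hr, href⟩ := hGor
  have hle : polyCodeg F + polyCodeg G ≤ r := by
    rw [hcodeg]
    apply Nat.sInf_le
    obtain ⟨x, hx, hxl, -⟩ := href
    exact ⟨hr, fun h => h x hx hxl⟩
  obtain ⟨ha, y, hy, hyl⟩ := codeg_spec hF
  obtain ⟨hb, z, hz, hzl⟩ := codeg_spec hG
  obtain ⟨⟨f, g, hfP, hgQ, -, -, -, hgl⟩, hdim⟩ := hjoin
  set a := polyCodeg F with haa
  set b := polyCodeg G with hbb
  have ha' : (a : ℝ) ≠ 0 := by exact_mod_cast ha.ne'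
  have hb' : (b : ℝ) ≠ 0 := by exact_mod_cast hb.ne'
  set iF : (Fin n → ℝ) →ᵃ[ℝ] (Fin N → ℝ) := g.comp (appendAff ![1, 0]) with hiF
  set iG : (Fin n → ℝ) →ᵃ[ℝ] (Fin N → ℝ) := g.comp (appendAff ![0, 1]) with hiG
  have hPu : P = convexHull ℝ (iF '' F ∪ iG '' G) := by
    rw [← hgQ, cayleyTwo, AffineMap.image_convexHull, Set.image_union, Set.image_image,
      Set.image_image]
    rfl
  have hspanF : ∀ x ∈ affineSpan ℝ F, appendAff ![1, 0] x ∈ affineSpan ℝ (cayleyTwo F G) := by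
    intro x hx
    have h1 : appendAff ![1, 0] x ∈ (affineSpan ℝ F).map (appendAff ![1, 0]) := ⟨x, hx, rfl⟩
    rw [AffineSubspace.map_span] at h1
    exact affineSpan_mono ℝ (Set.subset_union_left.trans (subset_convexHull ℝ _)) h1
  have hspanG : ∀ x ∈ affineSpan ℝ G, appendAff ![0, 1] x ∈ affineSpan ℝ (cayleyTwo F G) := by
    intro x hx
    have h1 : appendAff ![0, 1] x ∈ (affineSpan ℝ G).map (appendAff ![0, 1]) := ⟨x, hx, rfl⟩
    rw [AffineSubspace.map_span] at h1
    exact affineSpan_mono ℝ (Set.subset_union_right.trans (subset_convexHull ℝ _)) h1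
  have hlF : ∀ x ∈ affineSpan ℝ F, IsLatticePt x → IsLatticePt (iF x) := by
    intro x hx hxl
    refine hgl _ (hspanF x hx) (append_lattice hxl ?_)
    intro i
    fin_cases i
    · exact ⟨1, by simp⟩
    · exact ⟨0, by simp⟩
  have hlG : ∀ x ∈ affineSpan ℝ G, IsLatticePt x → IsLatticePt (iG x) := by
    intro x hx hxl
    refine hgl _ (hspanG x hx) (append_lattice hxl ?_)
    intro i
    fin_cases i
    · exact ⟨0, by simp⟩
    · exact ⟨1, by simp⟩
  obtain ⟨V, hV, hVl, hPV⟩ := hP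
  have hA := scaled_lattice hF iF hlF ha
  have hB := scaled_lattice hG iG hlG hb
  have eF := scaled_image F iF ha
  have eG := scaled_image G iG hb
  refine ⟨⟨a, ha, ?_⟩, ⟨b, hb, ?_⟩⟩
  · exact core V hV hVl hPV hr href _ _ (by rw [eF, eG]; exact hPu)
      (by rw [polyDim_smul _ ha', polyDim_smul _ hb']; exact hdim) ha hb hle hA hB hy hyl hz hzl
  · exact core V hV hVl hPV hr href _ _ (by rw [eF, eG, Set.union_comm]; exact hPu)
      (by rw [polyDim_smul _ ha', polyDim_smul _ hb', ← hdim]; ring) hb ha (by omega)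
      hB hA hz hzl hy hyl
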